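/- Let 𝐮 be the standard sequence over {a, b} whose slope has continued fraction expansion θ = [0, 1, 3, 2, 2, 2, …] (partial quotients a₁ = 1, a₂ = 3, and aₙ = 2 for all n ≥ 3), and let 𝐱_{12} = colour(𝐮, (123456)^ω, (1′2′3′4′5′6′)^ω). Then 𝐱_{12} is a balanced sequence over an alphabet of 12 letters whose critical exponent equals E(𝐱_{12}) = 11/10. -/

import Mathlib

open Filter
open scoped ENNReal

namespace BalancedCE

variable {α : Type*} {β : Type*}

/-- The factor of `v` of length `n` starting at position `i`. -/
def factorAt (v : ℕ → α) (i n : ℕ) : List α := (List.range n).map fun k => v (i + k)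

/-- `u` is a factor of the sequence `v`. -/
def IsFactor (v : ℕ → α) (u : List α) : Prop := ∃ i, factorAt v i u.length = u

/-- The word `w` occurs in the sequence `v` at position `i`. -/
def OccursAt (v : ℕ → α) (w : List α) (i : ℕ) : Prop := factorAt v i w.length = w

/-- A sequence is balanced if counts of each letter in equal-length factors differ by at most 1. -/
def Balanced [DecidableEq α] (v : ℕ → α) : Prop :=
  ∀ (a : α) (u w : List α), IsFactor v u → IsFactor v w → u.length = w.length →
    |(u.count a : ℤ) - (w.count a : ℤ)| ≤ 1

def EventuallyPeriodic (v : ℕ → α) : Prop :=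
  ∃ p, 0 < p ∧ ∃ N, ∀ n, N ≤ n → v (n + p) = v n

def Recurrent (v : ℕ → α) : Prop :=
  ∀ u : List α, IsFactor v u → ∀ N : ℕ, ∃ i, N ≤ i ∧ OccursAt v u i

/-- `i < j` are consecutive occurrences of the letter `a` in `v`. -/
def ConsecOcc (v : ℕ → α) (a : α) (i j : ℕ) : Prop :=
  i < j ∧ v i = a ∧ v j = a ∧ ∀ k, i < k → k < j → v k ≠ a

/-- `p` is a period of the finite word `z` (i.e. `z` is a prefix of `u^ω` with `|u| = p`). -/
def IsPeriod (z : List α) (p : ℕ) : Prop :=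
  0 < p ∧ ∀ i, i + p < z.length → z[i]? = z[i + p]?

/-- The minimal period of a finite word. -/
noncomputable def minPeriod (z : List α) : ℕ := sInf {p | IsPeriod z p}

/-- The exponent of a finite word: its length divided by its minimal period. -/
noncomputable def expE (z : List α) : ℝ≥0∞ := (z.length : ℝ≥0∞) / (minPeriod z : ℝ≥0∞)

/-- The critical exponent of a sequence: the supremum of exponents of nonempty factors. -/
noncomputable def criticalExponent (v : ℕ → α) : ℝ≥0∞ :=
  ⨆ (z : List α) (_ : IsFactor v z ∧ z ≠ []), expE z

/-- A Pansiot sequence over a `d`-letter alphabet. -/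
def Pansiot (d : ℕ) (v : ℕ → α) : Prop :=
  (∀ i : ℕ, (factorAt v i (d - 1)).Nodup) ∧
  ∀ (a : α) (i j : ℕ), ConsecOcc v a i j → v (i + 1) ≠ v (j + 1)

/-- The letter `a` has frequency `ρ` in the sequence `v`. -/
def HasFreq [DecidableEq α] (v : ℕ → α) (a : α) (ρ : ℝ) : Prop :=
  Tendsto (fun n => ((factorAt v 0 n).count a : ℝ) / n) atTop (nhds ρ)

/-- Factor complexity of a sequence. -/
noncomputable def complexity (v : ℕ → α) (n : ℕ) : ℕ :=
  Set.ncard {u : List α | IsFactor v u ∧ u.length = n}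

/-- Sturmian sequences: aperiodic binary sequences of factor complexity `n + 1`.
Convention: the letter `a` is `false`, the letter `b` is `true`. -/
def Sturmian (u : ℕ → Bool) : Prop :=
  ¬ EventuallyPeriodic u ∧ ∀ n, complexity u n = n + 1

/-- Prepending a letter to a sequence. -/
def consSeq (c : α) (v : ℕ → α) : ℕ → α := fun n =>
  match n with
  | 0 => c
  | Nat.succ m => v m

/-- A standard sequence: a Sturmian sequence `u` such that `a·u` and `b·u` are Sturmian. -/
def IsStandard (u : ℕ → Bool) : Prop :=
  Sturmian u ∧ Sturmian (consSeq false u) ∧ Sturmian (consSeq true u)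

/-- The slope of a binary sequence, with the convention `ρ_b > ρ_a` (`a = false`, `b = true`). -/
def HasSlope (u : ℕ → Bool) (θ : ℝ) : Prop :=
  ∃ ρa ρb : ℝ, HasFreq u false ρa ∧ HasFreq u true ρb ∧ ρa < ρb ∧ θ = ρa / ρb

/-- `θ` has the (infinite) continued fraction expansion `[0; a 1, a 2, a 3, …]`:
there are complete quotients' fractional parts `t n ∈ (0,1)` with `t 0 = θ` and
`1 / t n = a (n+1) + t (n+1)` for all `n`. (The value `a 0` is irrelevant.) -/
def HasCF (θ : ℝ) (a : ℕ → ℕ) : Prop :=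
  ∃ t : ℕ → ℝ, t 0 = θ ∧ ∀ n, 0 < t n ∧ t n < 1 ∧ 1 / t n = (a (n + 1) : ℝ) + t (n + 1)

/-- Number of positions `< n` where `u` takes the value `c`. -/
def countBefore (u : ℕ → Bool) (c : Bool) (n : ℕ) : ℕ :=
  ((List.range n).filter fun i => u i = c).length

/-- The colouring of a binary sequence `u` by `y` (on the `a = false` positions)
and `y'` (on the `b = true` positions). -/
def colour (u : ℕ → Bool) (y : ℕ → α) (y' : ℕ → β) : ℕ → α ⊕ β := fun n =>
  if u n = false then Sum.inl (y (countBefore u false n))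
  else Sum.inr (y' (countBefore u true n))

/-- A constant gap sequence: periodic, and consecutive occurrences of each occurring
letter are at a constant distance. -/
def ConstantGap (y : ℕ → α) : Prop :=
  (∃ p, 0 < p ∧ ∀ n, y (n + p) = y n) ∧
  ∀ c : α, (∃ i, y i = c) → ∃ g, 0 < g ∧ ∀ i j, ConsecOcc y c i j → j - i = g

/-- The discolouration (projection) map: letters of the first alphabet go to `a = false`,
letters of the second alphabet go to `b = true`. -/
def proj : α ⊕ β → Bool := Sum.elim (fun _ => false) (fun _ => true)

/-- `v` is a return word to `w` in the sequence `z`. -/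
def IsReturnWord (z : ℕ → α) (w v : List α) : Prop :=
  ∃ i j : ℕ, i < j ∧ OccursAt z w i ∧ OccursAt z w j ∧
    (∀ k, i < k → k < j → ¬ OccursAt z w k) ∧ v = factorAt z i (j - i)

def RightSpecial (z : ℕ → α) (w : List α) : Prop :=
  ∃ a b : α, a ≠ b ∧ IsFactor z (w ++ [a]) ∧ IsFactor z (w ++ [b])

def LeftSpecial (z : ℕ → α) (w : List α) : Prop :=
  ∃ a b : α, a ≠ b ∧ IsFactor z (a :: w) ∧ IsFactor z (b :: w)

def Bispecial (z : ℕ → α) (w : List α) : Prop := LeftSpecial z w ∧ RightSpecial z w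

/-- `o` enumerates, in increasing order, all occurrences of `w` in `z`. -/
def IsOccEnum (z : ℕ → α) (w : List α) (o : ℕ → ℕ) : Prop :=
  StrictMono o ∧ (∀ n, OccursAt z w (o n)) ∧ ∀ i, OccursAt z w i → ∃ n, o n = i

/-- The derived sequence of `z` with respect to the occurrence enumeration `o` of a factor:
its `n`-th letter is the return word between the `n`-th and `(n+1)`-st occurrences. -/
def derivedSeq (z : ℕ → α) (o : ℕ → ℕ) : ℕ → List α :=
  fun n => factorAt z (o n) (o (n + 1) - o n)

/-- The slope of a sequence over a two-letter alphabet: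
the ratio of the smaller letter frequency to the larger one. -/
def HasSlope2 {γ : Type*} [DecidableEq γ] (z : ℕ → γ) (θ : ℝ) : Prop :=
  ∃ (c c' : γ) (ρ ρ' : ℝ), c ≠ c' ∧ (∀ n, z n = c ∨ z n = c') ∧
    HasFreq z c ρ ∧ HasFreq z c' ρ' ∧ ρ < ρ' ∧ θ = ρ / ρ'

/-- The purely cyclic constant gap sequence `(0 1 ⋯ (δ-1))^ω` over `ZMod δ`. -/
def cyc (δ : ℕ) : ℕ → ZMod δ := fun n => (n : ZMod δ)

/-- The colouring `colour(u, (1 2 ⋯ δ)^ω, (1' 2' ⋯ δ')^ω)` over `2δ` letters. -/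
def colourCyc (δ : ℕ) (u : ℕ → Bool) : ℕ → ZMod δ ⊕ ZMod δ := colour u (cyc δ) (cyc δ)

/-!
If a Sturmian word is not balanced, it has a shortest word `w` such that `xwx` and `ywy` are
factors with `x ≠ y`. A Sturmian word has exactly one right special factor of each length, and it
recurs so often that `xwx` and `ywy` can be made to overlap, which yields a shorter such `w`.

Let `ρ` be the frequency of the letter `true`. Since `false·u` and `true·u` are balanced too, the
number of `true` among the first `n` letters of `u` is `⌊(n + 1) ρ⌋`; here `ρ = (11 - √2) / 17`.

A repetition of shift `p` in the coloured word is a repetition of `u` for which, in the first `p`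
letters, the count of each letter met by the overlap is divisible by `6`. If both counts are, then
`p = 6 q`, and the rotation by `ρ` avoids an arc of length `6 ‖q ρ‖` throughout the overlap; the
convergents of `ρ` tell how long that is possible. Otherwise the overlap is a run of one letter,
hence of length at most two, and balance bounds `p` from below. The ratio `11 / 10` is attained by
the equal letters at positions `4` and `14`.
-/

/-! ### Factors -/

section Factors

variable (v : ℕ → α) (i m n : ℕ)

@[simp]
theorem length_factorAt : (factorAt v i n).length = n := by simp [factorAt]

theorem factorAt_add : factorAt v i (m + n) = factorAt v i m ++ factorAt v (i + m) n := by
  simp [factorAt, List.range_add, Nat.add_assoc]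

theorem factorAt_succ : factorAt v i (n + 1) = factorAt v i n ++ [v (i + n)] := by
  simp [factorAt, List.range_succ]

theorem factorAt_succ' : factorAt v i (n + 1) = v i :: factorAt v (i + 1) n := by
  simp [factorAt, List.range_succ_eq_map, Nat.add_right_comm, Nat.add_assoc]

theorem isFactor_factorAt : IsFactor v (factorAt v i n) := ⟨i, by rw [length_factorAt]⟩

theorem count_factorAt [DecidableEq α] (a : α) :
    (factorAt v i n).count a = Nat.count (fun k => v (i + k) = a) n := by
  induction n with
  | zero => simp [factorAt]
  | succ n ih => simp [factorAt_succ, Nat.count_succ, ih, List.count_singleton]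

theorem count_factorAt_add [DecidableEq α] (a : α) :
    (factorAt v i (m + n)).count a =
      (factorAt v i m).count a + (factorAt v (i + m) n).count a := by
  rw [factorAt_add, List.count_append]

theorem count_factorAt_succ [DecidableEq α] (a : α) :
    (factorAt v i (n + 1)).count a =
      (factorAt v i n).count a + if v (i + n) = a then 1 else 0 := by
  simp [factorAt_succ, List.count_singleton]

theorem factorAt_consSeq_zero (c : α) :
    factorAt (consSeq c v) 0 (n + 1) = c :: factorAt v 0 n := by
  rw [factorAt_succ']
  simp [factorAt, consSeq, Nat.add_comm 1]

theorem factorAt_consSeq_succ (c : α) :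
    factorAt (consSeq c v) (i + 1) n = factorAt v i n := by
  simp [factorAt, consSeq, Nat.add_right_comm i 1]

variable {v}

theorem factorAt_eq_factorAt_iff {i j n : ℕ} :
    factorAt v i n = factorAt v j n ↔ ∀ k < n, v (i + k) = v (j + k) := by
  simp [factorAt]

theorem balanced_iff [DecidableEq α] :
    Balanced v ↔ ∀ (a : α) (i j n : ℕ),
      (factorAt v i n).count a ≤ (factorAt v j n).count a + 1 := by
  constructor
  · intro h a i j n
    have := h a _ _ (isFactor_factorAt v i n) (isFactor_factorAt v j n) (by simp)
    rw [abs_le] at this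
    omega
  · rintro h a u w ⟨i, hi⟩ ⟨j, hj⟩ hlen
    have hij := h a i j u.length
    have hji := h a j i u.length
    rw [hlen, hj, ← hlen, hi] at hij hji
    rw [abs_le]
    omega

theorem rightSpecial_iff {w : List α} :
    RightSpecial v w ↔
      ∃ i j, OccursAt v w i ∧ OccursAt v w j ∧ v (i + w.length) ≠ v (j + w.length) := by
  have key (a : α) (i : ℕ) :
      factorAt v i (w ++ [a]).length = w ++ [a] ↔ OccursAt v w i ∧ v (i + w.length) = a := by
    simp [factorAt_succ, OccursAt]
  constructor
  · rintro ⟨a, b, hab, ⟨i, hi⟩, j, hj⟩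
    obtain ⟨hwi, rfl⟩ := (key a i).1 hi
    obtain ⟨hwj, rfl⟩ := (key b j).1 hj
    exact ⟨i, j, hwi, hwj, hab⟩
  · rintro ⟨i, j, hwi, hwj, hne⟩
    exact ⟨_, _, hne, ⟨i, (key _ i).2 ⟨hwi, rfl⟩⟩, j, (key _ j).2 ⟨hwj, rfl⟩⟩

theorem rightSpecial_factorAt {i j n : ℕ} (h : factorAt v i n = factorAt v j n)
    (hne : v (i + n) ≠ v (j + n)) : RightSpecial v (factorAt v i n) :=
  rightSpecial_iff.2 ⟨i, j, by simp [OccursAt], by simp [OccursAt, h], by simpa using hne⟩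

theorem RightSpecial.of_cons {a : α} {w : List α} (h : RightSpecial v (a :: w)) :
    RightSpecial v w := by
  obtain ⟨i, j, hi, hj, hne⟩ := rightSpecial_iff.1 h
  rw [OccursAt, List.length_cons, factorAt_succ', List.cons.injEq] at hi hj
  refine rightSpecial_iff.2 ⟨i + 1, j + 1, hi.2, hj.2, ?_⟩
  simpa only [List.length_cons, Nat.add_right_comm, Nat.add_assoc] using hne

theorem eventuallyPeriodic_of_factorAt_eq {i p n : ℕ} (hp : 0 < p)
    (heq : factorAt v i n = factorAt v (i + p) n)
    (hns : ∀ k < p, ¬ RightSpecial v (factorAt v (i + k) n)) : EventuallyPeriodic v := by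
  have next (k : ℕ) (hk : ¬ RightSpecial v (factorAt v (i + k) n))
      (hkp : factorAt v (i + k) n = factorAt v (i + k + p) n) :
      v (i + k + n) = v (i + k + p + n) := by
    by_contra hne
    exact hk (rightSpecial_factorAt hkp hne)
  have key (k : ℕ) : factorAt v (i + k) n = factorAt v (i + k + p) n ∧
      ¬ RightSpecial v (factorAt v (i + k) n) := by
    induction k using Nat.strong_induction_on with
    | _ k ih =>
      refine ⟨?_, ?_⟩
      · cases k with
        | zero => exact heq
        | succ k =>
          obtain ⟨hk, hkns⟩ := ih k (by omega)
          have hsucc : factorAt v (i + k) (n + 1) = factorAt v (i + k + p) (n + 1) := by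
            rw [factorAt_succ, factorAt_succ, hk, next k hkns hk]
          rw [factorAt_succ', factorAt_succ', List.cons.injEq] at hsucc
          simpa only [Nat.add_assoc, Nat.add_left_comm, Nat.add_comm 1] using hsucc.2
      · rcases lt_or_ge k p with hkp | hkp
        · exact hns k hkp
        · obtain ⟨hk, hkns⟩ := ih (k - p) (by omega)
          rwa [hk, show i + (k - p) + p = i + k by omega] at hkns
  refine ⟨p, hp, i + n, fun l hl => ?_⟩
  have hnext := next (l - (i + n)) (key _).2 (key _).1
  rw [show i + (l - (i + n)) + n = l by omega,
    show i + (l - (i + n)) + p + n = l + p by omega] at hnext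
  exact hnext.symm

theorem factorAt_eq_of_overlap {i j k n : ℕ} (hk0 : 0 < k) (hkn : k ≤ n)
    (heq : factorAt v (i + 1) n = factorAt v (j + 1) n)
    (hocc : factorAt v (i + k) (n + 1) = factorAt v j (n + 1)) :
    v (j + k) = v j ∧ v (i + (n - k) + 1) = v (i + n + 1) ∧
      factorAt v (i + 1) (n - k) = factorAt v (j + k + 1) (n - k) := by
  have heq' {l : ℕ} (hl0 : 0 < l) (hln : l ≤ n) : v (i + l) = v (j + l) := by
    have h := factorAt_eq_factorAt_iff.1 heq (l - 1) (by omega)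
    rwa [show i + 1 + (l - 1) = i + l by omega, show j + 1 + (l - 1) = j + l by omega] at h
  have hocc' {l : ℕ} (hln : l ≤ n) : v (i + k + l) = v (j + l) :=
    factorAt_eq_factorAt_iff.1 hocc l (by omega)
  refine ⟨(heq' hk0 hkn).symm.trans (hocc' n.zero_le), ?_,
    factorAt_eq_factorAt_iff.2 fun l hl => ?_⟩
  · have hend := hocc' (l := n - k + 1) (by omega)
    rw [show i + k + (n - k + 1) = i + n + 1 by omega] at hend
    exact (heq' (Nat.succ_pos _) (by omega)).trans hend.symm
  · have hl1 := heq' (l := 1 + l) (by omega) (by omega)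
    have hkl := heq' (l := k + 1 + l) (by omega) (by omega)
    simp only [Nat.add_assoc] at hl1 hkl hocc' ⊢
    rw [hl1, ← hkl, hocc' (by omega)]

end Factors

/-! ### Sturmian sequences are balanced -/

section RightSpecial

variable (u : ℕ → Bool)

theorem finite_setOf_isFactor (n : ℕ) : {w | IsFactor u w ∧ w.length = n}.Finite :=
  (List.finite_length_eq Bool n).subset fun _ hw => hw.2

theorem complexity_succ (n : ℕ) :
    complexity u (n + 1) =
      complexity u n + {w : List Bool | w.length = n ∧ RightSpecial u w}.ncard := by
  let A (c : Bool) : Set (List Bool) := {w | IsFactor u (w ++ [c]) ∧ w.length = n}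
  have hfin (c : Bool) : (A c).Finite :=
    (List.finite_length_eq Bool n).subset fun _ hw => hw.2
  have hinj (c : Bool) : Function.Injective (fun w : List Bool => w ++ [c]) :=
    List.append_left_injective [c]
  have hunion : {w | IsFactor u w ∧ w.length = n} = A false ∪ A true := by
    ext w
    constructor
    · rintro ⟨⟨i, hi⟩, rfl⟩
      have hext : IsFactor u (w ++ [u (i + w.length)]) :=
        ⟨i, by simp [factorAt_succ, hi]⟩
      cases hc : u (i + w.length) <;> rw [hc] at hext
      exacts [Or.inl ⟨hext, rfl⟩, Or.inr ⟨hext, rfl⟩]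
    · have hpre (c : Bool) : w ∈ A c → IsFactor u w ∧ w.length = n := by
        rintro ⟨⟨i, hi⟩, hlen⟩
        simp only [List.length_append, List.length_singleton, factorAt_succ] at hi
        exact ⟨⟨i, List.append_inj_left' hi rfl⟩, hlen⟩
      exact Or.rec (hpre _) (hpre _)
  have hinter : {w : List Bool | w.length = n ∧ RightSpecial u w} = A false ∩ A true := by
    ext w
    simp only [RightSpecial, A, Set.mem_ofPred_eq, Set.mem_inter_iff, Bool.exists_bool]
    tauto
  have hsucc : {w | IsFactor u w ∧ w.length = n + 1} =
      (· ++ [false]) '' A false ∪ (· ++ [true]) '' A true := by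
    ext w
    rcases List.eq_nil_or_concat w with rfl | ⟨w, c, rfl⟩
    · simp
    · cases c <;> simp [A]
  have hdisj : Disjoint ((· ++ [false]) '' A false) ((· ++ [true]) '' A true) := by
    simp [Set.disjoint_left]
  rw [complexity, complexity, hsucc, hunion, hinter,
    Set.ncard_union_eq hdisj ((hfin _).image _) ((hfin _).image _),
    Set.ncard_image_of_injective _ (hinj _), Set.ncard_image_of_injective _ (hinj _),
    Set.ncard_union_add_ncard_inter _ _ (hfin _) (hfin _)]

variable {u}

theorem Sturmian.existsUnique_rightSpecial (hu : Sturmian u) (n : ℕ) :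
    ∃! w : List Bool, w.length = n ∧ RightSpecial u w := by
  have hcard : {w : List Bool | w.length = n ∧ RightSpecial u w}.ncard = 1 := by
    have := complexity_succ u n
    rw [hu.2, hu.2] at this
    omega
  obtain ⟨w, hw⟩ := Set.ncard_eq_one.1 hcard
  exact ⟨w, hw.ge rfl, fun w' hw' => hw.le hw'⟩

-- Pigeonhole: the `|w| + 1` windows of length `|w|` starting at `i, …, i + |w|` would otherwise
-- repeat one of the `|w|` remaining factors, all of which extend uniquely to the right.
theorem Sturmian.exists_occursAt_of_rightSpecial (hu : Sturmian u) {w : List Bool}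
    (hw : RightSpecial u w) (i : ℕ) : ∃ k ≤ w.length, OccursAt u w (i + k) := by
  by_contra! hno
  set n := w.length
  let F : Set (List Bool) := {w | IsFactor u w ∧ w.length = n}
  have hwF : w ∈ F := by
    obtain ⟨j, -, hj, -⟩ := rightSpecial_iff.1 hw
    exact ⟨⟨j, hj⟩, rfl⟩
  have hcard : (F \ {w}).ncard < (Set.Iic n).ncard := by
    rw [Set.ncard_sdiff_singleton_of_mem hwF, show F.ncard = n + 1 from hu.2 n,
      Set.ncard_eq_toFinset_card', Set.toFinset_Iic, Nat.card_Iic]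
    omega
  have hns (k : ℕ) (hk : k ≤ n) : ¬ RightSpecial u (factorAt u (i + k) n) := fun hk' =>
    hno k hk ((hu.existsUnique_rightSpecial n).unique ⟨length_factorAt .., hk'⟩ ⟨rfl, hw⟩)
  obtain ⟨k, hk, l, hl, hkl, heq⟩ := Set.exists_ne_map_eq_of_ncard_lt_of_maps_to hcard
    (f := fun k => factorAt u (i + k) n)
    (fun k hk => ⟨⟨isFactor_factorAt .., length_factorAt ..⟩, hno k hk⟩)
    ((finite_setOf_isFactor u n).subset Set.sdiff_subset)
  wlog hlt : k < l generalizing k l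
  · exact this l hl k hk hkl.symm heq.symm (by omega)
  refine hu.1 (eventuallyPeriodic_of_factorAt_eq (i := i + k) (p := l - k) (n := n)
    (by omega) ?_ ?_)
  · simpa only [show i + k + (l - k) = i + l by omega] using heq
  · intro j hj
    rw [Nat.add_assoc]
    exact hns (k + j) (by have : l ≤ n := hl; omega)

theorem Sturmian.exists_rightSpecial_cons (hu : Sturmian u) {w : List Bool}
    (hw : RightSpecial u w) : ∃ c, RightSpecial u (c :: w) := by
  obtain ⟨z, ⟨hzlen, hz⟩, -⟩ := hu.existsUnique_rightSpecial (w.length + 1)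
  obtain ⟨c, t, rfl⟩ := List.exists_cons_of_length_eq_add_one hzlen
  have ht : t = w := (hu.existsUnique_rightSpecial w.length).unique
    ⟨by simpa using hzlen, hz.of_cons⟩ ⟨rfl, hw⟩
  exact ⟨c, ht ▸ hz⟩

-- If `w` is a shortest word with both `xwx` and `ywy` factors, then one of `xw` and `yw`, say `yw`,
-- is right special, so it meets the occurrence of `xwx`; for the overlap `t`, a proper prefix and
-- suffix of `w`, both `xtx` and `yty` are then factors.
theorem Sturmian.factorAt_ne_of_unbalanced (hu : Sturmian u) (n : ℕ) {i j : ℕ} (hne : u i ≠ u j)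
    (hi : u (i + n + 1) = u i) (hj : u (j + n + 1) = u j) :
    factorAt u (i + 1) n ≠ factorAt u (j + 1) n := by
  induction n using Nat.strong_induction_on generalizing i j with
  | _ n ih =>
  intro heq
  have hspecial : RightSpecial u (factorAt u (i + 1) n) :=
    rightSpecial_factorAt heq (by rwa [Nat.add_right_comm, hi, Nat.add_right_comm, hj])
  wlog hyw : RightSpecial u (factorAt u j (n + 1)) generalizing i j
  · obtain ⟨c, hc⟩ := hu.exists_rightSpecial_cons hspecial
    have hci : c = u i := by
      have hcj : c ≠ u j := fun hcj => hyw (by rwa [factorAt_succ', ← heq, ← hcj])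
      exact (Bool.eq_not.2 hcj).trans (Bool.eq_not.2 hne).symm
    refine this hne.symm hj hi heq.symm (heq ▸ hspecial) ?_
    rwa [factorAt_succ', ← hci]
  obtain ⟨k, hk, hocc⟩ := hu.exists_occursAt_of_rightSpecial hyw i
  rw [length_factorAt] at hk
  rw [OccursAt, length_factorAt] at hocc
  have hocc0 : u (i + k) = u j := factorAt_eq_factorAt_iff.1 hocc 0 (by omega)
  have hk0 : k ≠ 0 := by
    rintro rfl
    exact hne hocc0
  have hkn : k ≠ n + 1 := by
    rintro rfl
    exact hne (hi.symm.trans hocc0)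
  obtain ⟨hjk, hi', heq'⟩ := factorAt_eq_of_overlap (by omega) (by omega) heq hocc
  refine ih (n - k) (by omega) (hjk ▸ hne) (hi'.trans hi) ?_ heq'
  rw [show j + k + (n - k) + 1 = j + n + 1 by omega, hj, hjk]

-- Adding one letter to both windows changes the difference of their counts by at most one, so
-- a difference of two would first be reached at the end of a stretch where the windows agree.
theorem Sturmian.balanced (hu : Sturmian u) : Balanced u := by
  refine balanced_iff.2 fun c i j n => ?_
  suffices h : (factorAt u i n).count c ≤ (factorAt u j n).count c ∨
      (factorAt u i n).count c = (factorAt u j n).count c + 1 ∧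
      ∃ m < n, u (i + m) = c ∧ u (j + m) ≠ c ∧
        ∀ l, m < l → l < n → u (i + l) = u (j + l) by omega
  induction n with
  | zero => simp [factorAt]
  | succ n ih =>
    rw [count_factorAt_succ, count_factorAt_succ]
    rcases ih with hle | ⟨heq, m, hmn, him, hjm, hl⟩
    · by_cases hc : u (i + n) = c ∧ u (j + n) ≠ c
      · rcases hle.lt_or_eq with hlt | heq
        · exact Or.inl (by simp [hc]; omega)
        · exact Or.inr ⟨by simp [hc, heq], n, by omega, hc.1, hc.2, by omega⟩
      · exact Or.inl (by split_ifs <;> first | omega | tauto)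
    · by_cases hij : u (i + n) = u (j + n)
      · refine Or.inr ⟨by rw [hij, heq, Nat.add_right_comm], m, by omega, him, hjm,
          fun l hml hln => ?_⟩
        rcases (Nat.lt_succ_iff.1 hln).lt_or_eq with hln | rfl
        exacts [hl l hml hln, hij]
      by_cases hin : u (i + n) = c
      · refine absurd (factorAt_eq_factorAt_iff.2 fun l hln => ?_)
          (hu.factorAt_ne_of_unbalanced (n - (m + 1)) (i := i + m) (j := j + m)
            (him.trans_ne hjm.symm) ?_ ?_)
        · simpa only [Nat.add_assoc] using hl (m + (1 + l)) (by omega) (by omega)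
        · rw [show i + m + (n - (m + 1)) + 1 = i + n by omega, hin, him]
        · rw [show j + m + (n - (m + 1)) + 1 = j + n by omega]
          exact (Bool.eq_not.2 (hin ▸ Ne.symm hij)).trans (Bool.eq_not.2 hjm).symm
      · have hjn : u (j + n) = c := by
          rw [Bool.eq_not.2 (Ne.symm hij), Bool.eq_not.2 hin, Bool.not_not]
        exact Or.inl (by simp [hin, hjn, heq])

end RightSpecial

/-! ### Standard sequences are mechanical words -/

section Standard

variable {u : ℕ → Bool} {c : Bool} {r : ℝ}

theorem countBefore_eq_natCount (u : ℕ → Bool) (c : Bool) (n : ℕ) :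
    countBefore u c n = Nat.count (fun k => u k = c) n := by
  rw [countBefore, Nat.count, List.countP_eq_length_filter]

theorem countBefore_succ (u : ℕ → Bool) (c : Bool) (n : ℕ) :
    countBefore u c (n + 1) = countBefore u c n + if u n = c then 1 else 0 := by
  rw [countBefore_eq_natCount, countBefore_eq_natCount, Nat.count_succ]

theorem countBefore_eq_count (u : ℕ → Bool) (c : Bool) (n : ℕ) :
    countBefore u c n = (factorAt u 0 n).count c := by
  simp only [countBefore_eq_natCount, count_factorAt, Nat.zero_add]

theorem countBefore_add (u : ℕ → Bool) (c : Bool) (i n : ℕ) :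
    countBefore u c (i + n) = countBefore u c i + (factorAt u i n).count c := by
  rw [countBefore_eq_count, countBefore_eq_count, count_factorAt_add, Nat.zero_add]

theorem count_not_add_count_factorAt (u : ℕ → Bool) (c : Bool) (i n : ℕ) :
    (factorAt u i n).count (!c) + (factorAt u i n).count c = n := by
  rw [List.count_not_add_count, length_factorAt]

theorem HasFreq.not (h : HasFreq u c r) : HasFreq u (!c) (1 - r) := by
  refine (h.const_sub 1).congr' ?_
  filter_upwards [eventually_ne_atTop 0] with n hn
  have hn' : (n : ℝ) ≠ 0 := Nat.cast_ne_zero.2 hn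
  rw [one_sub_div hn', sub_eq_iff_eq_add.2]
  rw [← Nat.cast_add, count_not_add_count_factorAt]

theorem IsStandard.sturmian_consSeq (hu : IsStandard u) (d : Bool) : Sturmian (consSeq d u) := by
  cases d
  exacts [hu.2.1, hu.2.2]

-- Compare a window of the balanced sequence `d·u` with its prefix, for `d = c` and for `d ≠ c`.
theorem IsStandard.count_factorAt_mem_Icc (hu : IsStandard u) (c : Bool) (i n : ℕ) :
    (factorAt u i (n + 1)).count c ∈ Set.Icc (countBefore u c n) (countBefore u c n + 1) := by
  have hbal (d : Bool) := balanced_iff.1 (hu.sturmian_consSeq d).balanced c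
  simp only [countBefore_eq_count, Set.mem_Icc]
  constructor
  · simpa [factorAt_consSeq_zero, factorAt_consSeq_succ] using hbal c 0 (i + 1) (n + 1)
  · simpa [factorAt_consSeq_zero, factorAt_consSeq_succ] using hbal (!c) (i + 1) 0 (n + 1)

theorem IsStandard.countBefore_mul_mem_Icc (hu : IsStandard u) (c : Bool) (n k : ℕ) :
    countBefore u c (k * (n + 1)) ∈
      Set.Icc (k * countBefore u c n) (k * (countBefore u c n + 1)) := by
  induction k with
  | zero => simp [countBefore]
  | succ k ih =>
    have hwindow := hu.count_factorAt_mem_Icc c (k * (n + 1)) n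
    simp only [Nat.add_one_mul k, countBefore_add]
    exact ⟨Nat.add_le_add ih.1 hwindow.1, Nat.add_le_add ih.2 hwindow.2⟩

theorem IsStandard.mul_freq_mem_Icc (hu : IsStandard u) (hr : HasFreq u c r) (n : ℕ) :
    (n + 1) * r ∈ Set.Icc (countBefore u c n : ℝ) (countBefore u c n + 1) := by
  have hn : (0 : ℝ) < n + 1 := by positivity
  have hlim : Tendsto (fun k : ℕ => (countBefore u c (k * (n + 1)) : ℝ) / (k * (n + 1)))
      atTop (nhds r) := by
    have hcomp := hr.comp (tendsto_id.atTop_mul_const' n.succ_pos)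
    simpa [Function.comp_def, ← countBefore_eq_count] using hcomp
  have hmem : r ∈ Set.Icc ((countBefore u c n : ℝ) / (n + 1))
      ((countBefore u c n + 1) / (n + 1)) := by
    refine isClosed_Icc.mem_of_tendsto hlim ?_
    filter_upwards [eventually_gt_atTop 0] with k hk
    have hk' : (0 : ℝ) < k := Nat.cast_pos.2 hk
    obtain ⟨hlo, hhi⟩ := hu.countBefore_mul_mem_Icc c n k
    rw [← mul_div_mul_left _ _ hk'.ne', ← mul_div_mul_left (_ + 1) _ hk'.ne']
    exact ⟨by gcongr; exact_mod_cast hlo, by gcongr; exact_mod_cast hhi⟩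
  rwa [Set.mem_Icc, div_le_iff₀' hn, le_div_iff₀' hn] at hmem

theorem IsStandard.countBefore_eq_floor (hu : IsStandard u) (hr : HasFreq u c r)
    (hirr : Irrational r) (n : ℕ) : (countBefore u c n : ℤ) = ⌊(n + 1) * r⌋ := by
  obtain ⟨hlo, hhi⟩ := hu.mul_freq_mem_Icc hr n
  have hne : (n + 1) * r ≠ countBefore u c n + 1 := by
    exact_mod_cast (hirr.natCast_mul n.succ_ne_zero).ne_nat (countBefore u c n + 1)
  exact (Int.floor_eq_iff.2 ⟨by exact_mod_cast hlo, by exact_mod_cast hhi.lt_of_ne hne⟩).symm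

theorem IsStandard.abs_count_factorAt_sub_lt (hu : IsStandard u) (hr : HasFreq u c r)
    (hirr : Irrational r) (i n : ℕ) : |((factorAt u i n).count c : ℝ) - n * r| < 1 := by
  have hcount : ((factorAt u i n).count c : ℤ) = ⌊((i + n : ℕ) + 1) * r⌋ - ⌊(i + 1) * r⌋ := by
    rw [← hu.countBefore_eq_floor hr hirr, ← hu.countBefore_eq_floor hr hirr, countBefore_add]
    push_cast
    ring
  have hcount' := congrArg (Int.cast (R := ℝ)) hcount
  push_cast at hcount'
  have hi := Int.floor_le ((i + 1) * r)
  have hi' := Int.lt_floor_add_one ((i + 1) * r)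
  have hn := Int.floor_le ((i + n + 1) * r)
  have hn' := Int.lt_floor_add_one ((i + n + 1) * r)
  rw [abs_lt]
  constructor <;> linarith

end Standard

/-! ### The frequency determined by the slope -/

section Slope

variable {u : ℕ → Bool} {θ θ' : ℝ} {a : ℕ → ℕ}

theorem intFractPair_of_natCast_add {t : ℝ} (ht : t ∈ Set.Ico (0 : ℝ) 1) (m : ℕ) :
    GenContFract.IntFractPair.of (m + t : ℝ) = ⟨m, t⟩ := by
  rw [GenContFract.IntFractPair.of, Int.floor_natCast_add, Int.fract_natCast_add,
    Int.floor_eq_zero_iff.2 ht, Int.fract_eq_self.2 ht, add_zero]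

theorem HasCF.genContFract_of_eq (h : HasCF θ a) :
    GenContFract.of θ = ⟨0, ⟨fun n => some ⟨1, a (n + 1)⟩, by rintro n ⟨⟩⟩⟩ := by
  obtain ⟨t, rfl, ht⟩ := h
  have hmem (n : ℕ) : t n ∈ Set.Ico (0 : ℝ) 1 := ⟨(ht n).1.le, (ht n).2.1⟩
  have hstep (n : ℕ) :
      GenContFract.IntFractPair.of (t n)⁻¹ = ⟨(a (n + 1) : ℤ), t (n + 1)⟩ := by
    rw [← one_div, (ht n).2.2, intFractPair_of_natCast_add (hmem _)]
  have hstream (n : ℕ) : GenContFract.IntFractPair.stream (t 0) (n + 1) =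
      some ⟨(a (n + 1) : ℤ), t (n + 1)⟩ := by
    induction n with
    | zero =>
      refine GenContFract.IntFractPair.succ_nth_stream_eq_some_iff.2
        ⟨⟨0, t 0⟩, ?_, (ht 0).1.ne', hstep 0⟩
      rw [GenContFract.IntFractPair.stream_zero]
      simpa using intFractPair_of_natCast_add (hmem 0) 0
    | succ n ih =>
      exact GenContFract.IntFractPair.succ_nth_stream_eq_some_iff.2
        ⟨_, ih, (ht (n + 1)).1.ne', hstep (n + 1)⟩
  refine GenContFract.ext ?_ (Stream'.Seq.ext fun n => ?_)
  · rw [GenContFract.of_h_eq_floor, Int.floor_eq_zero_iff.2 (hmem 0), Int.cast_zero]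
  · rw [GenContFract.get?_of_eq_some_of_succ_get?_intFractPair_stream (hstream n), Int.cast_natCast]
    rfl

theorem HasCF.unique (h : HasCF θ a) (h' : HasCF θ' a) : θ = θ' := by
  have hθ := GenContFract.of_convergence θ
  rw [h.genContFract_of_eq, ← h'.genContFract_of_eq] at hθ
  exact tendsto_nhds_unique hθ (GenContFract.of_convergence θ')

theorem sqrt_two_mem_Ioo : √2 ∈ Set.Ioo (1.4142 : ℝ) 1.4143 :=
  ⟨Real.lt_sqrt_of_sq_lt (by norm_num), (Real.sqrt_lt' (by norm_num)).2 (by norm_num)⟩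

theorem HasCF.cons (h : HasCF θ fun n => a (n + 1)) (ha : 0 < a 1) :
    HasCF (1 / (a 1 + θ)) a := by
  obtain ⟨t, rfl, ht⟩ := h
  have ha' : (1 : ℝ) ≤ a 1 := by exact_mod_cast ha
  have ht0 := (ht 0).1
  refine ⟨fun | 0 => 1 / (a 1 + t 0) | n + 1 => t n, rfl, ?_⟩
  rintro (_ | n)
  · exact ⟨by positivity, (div_lt_one (by positivity)).2 (by linarith), one_div_one_div _⟩
  · exact ht n

theorem hasCF_sqrt_two_sub_one (ha : ∀ n, 0 < n → a n = 2) : HasCF (√2 - 1) a := by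
  obtain ⟨hlo, hhi⟩ := sqrt_two_mem_Ioo
  have h1 : √2 - 1 ≠ 0 := by linarith
  refine ⟨fun _ => √2 - 1, rfl, fun n => ⟨by linarith, by linarith, ?_⟩⟩
  rw [ha (n + 1) n.succ_pos]
  field_simp
  push_cast
  linear_combination -Real.sq_sqrt (zero_le_two (α := ℝ))

theorem HasSlope.hasFreq_true (h : HasSlope u θ) : HasFreq u true (1 / (1 + θ)) := by
  obtain ⟨x, y, hx, hy, hxy, rfl⟩ := h
  have hsum : x = 1 - y := tendsto_nhds_unique hx hy.not
  have hy0 : y ≠ 0 := by linarith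
  rwa [show 1 / (1 + x / y) = y by
    field_simp
    rw [hsum, add_sub_cancel, div_one]]

end Slope

/-- The frequency of the letter `b` in the standard sequence of slope `[0, 1, 3, 2, 2, 2, …]`. -/
noncomputable def rho : ℝ := (11 - √2) / 17

theorem hasFreq_true_rho {u : ℕ → Bool} {θ : ℝ} {a : ℕ → ℕ} (hθ : HasSlope u θ) (hcf : HasCF θ a)
    (ha1 : a 1 = 1) (ha2 : a 2 = 3) (ha : ∀ n, 3 ≤ n → a n = 2) : HasFreq u true rho := by
  have htail : HasCF (√2 - 1) fun n => a (n + 1 + 1) :=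
    hasCF_sqrt_two_sub_one fun n hn => ha _ (by omega)
  have hcf' := (htail.cons (a := fun n => a (n + 1)) (by simp [ha2])).cons (by simp [ha1])
  have hfreq := hθ.hasFreq_true
  have hrho : 1 / (1 + 1 / (a 1 + 1 / (a (1 + 1) + (√2 - 1)))) = rho := by
    rw [rho, ha1, ha2, Nat.cast_one, Nat.cast_ofNat, show 3 + (√2 - 1) = 2 + √2 by ring]
    field_simp
    linear_combination 2 * Real.sq_sqrt (zero_le_two (α := ℝ))
  rwa [hcf.unique hcf', hrho] at hfreq

theorem irrational_rho : Irrational rho := by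
  have h := (irrational_sqrt_two.natCast_sub 11).div_natCast (m := 17) (by norm_num)
  exact_mod_cast h

theorem rho_mem_Ioo : rho ∈ Set.Ioo (0.56386 : ℝ) 0.56388 := by
  obtain ⟨hlo, hhi⟩ := sqrt_two_mem_Ioo
  rw [rho]
  constructor <;> linarith

/-! ### Hitting times of a rotation and best approximations -/

section Rotation

/-- Among any `T` consecutive points of an orbit of the rotation by `r` of the circle `ℝ/ℤ`, at
least one falls into the arc `[0, δ)`. The circle is unrolled: the arc is replaced by its
translates `[n, n + δ)`. -/
def HitsArc (r : ℝ) (T : ℕ) (δ : ℝ) : Prop :=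
  ∀ x : ℝ, ∃ k < T, ∃ n : ℤ, x + k * r ∈ Set.Ico (n : ℝ) (n + δ)

variable {r δ δ' : ℝ} {T : ℕ}

theorem hitsArc_one_one : HitsArc r 1 1 := fun x =>
  ⟨0, one_pos, ⌊x⌋, by simpa using Int.floor_le x, by simp⟩

theorem HitsArc.mono (h : HitsArc r T δ) (hδ : δ ≤ δ') : HitsArc r T δ' := fun x =>
  let ⟨k, hk, n, hn⟩ := h x
  ⟨k, hk, n, Set.Ico_subset_Ico_right (by linarith) hn⟩

-- A point of the longer arc that misses the shorter one is moved into it by `q` more steps,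
-- which translate by `q r - s` modulo 1.
theorem HitsArc.shrink (h : HitsArc r T δ) (q : ℕ) (s : ℤ) (hδ' : |q * r - s| ≤ δ')
    (hδ : δ ≤ δ' + |q * r - s|) : HitsArc r (T + q) δ' := by
  intro x
  rcases abs_cases (q * r - s) with ⟨habs, -⟩ | ⟨habs, -⟩ <;> rw [habs] at hδ hδ'
  · obtain ⟨k, hk, n, hlo, hhi⟩ := h (x + (δ - δ'))
    rcases le_or_gt (n : ℝ) (x + k * r) with hn | hn
    · exact ⟨k, by omega, n, hn, by linarith⟩
    · refine ⟨k + q, by omega, n + s, ?_, ?_⟩ <;> push_cast <;> linarith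
  · obtain ⟨k, hk, n, hlo, hhi⟩ := h x
    rcases lt_or_ge (x + k * r) (n + δ') with hn | hn
    · exact ⟨k, by omega, n, hlo, hn⟩
    · refine ⟨k + q, by omega, n + s, ?_, ?_⟩ <;> push_cast <;> linarith

-- A point within distance `|e|` of an integer, on the appropriate side, has its floor changed by
-- the translation by `e`.
theorem HitsArc.lt_of_floor_eq {e x : ℝ} {m : ℕ} (h : HitsArc r T |e|)
    (hm : ∀ k ≤ m, ⌊x + k * r + e⌋ = ⌊x + k * r⌋) : m + 1 < T := by
  by_contra! hT
  rcases abs_cases e with ⟨habs, -⟩ | ⟨habs, -⟩ <;> rw [habs] at h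
  · obtain ⟨k, hk, n, hlo, hhi⟩ := h (x + e)
    have hge : n ≤ ⌊x + k * r + e⌋ := Int.le_floor.2 (by linarith)
    have hlt : ⌊x + k * r⌋ < n := Int.floor_lt.2 (by linarith)
    have := hm k (by omega)
    omega
  · obtain ⟨k, hk, n, hlo, hhi⟩ := h x
    have hge : n ≤ ⌊x + k * r⌋ := Int.le_floor.2 hlo
    have hlt : ⌊x + k * r + e⌋ < n := Int.floor_lt.2 (by linarith)
    have := hm k (by omega)
    omega

-- Writing `(p, P)` as an integer combination of `(q₁, s₁)` and `(q₂, s₂)`, the bound `p < q₂`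
-- makes the coefficients of opposite signs, so the two errors do not cancel.
theorem abs_mul_sub_le_of_isUnit_det {q₁ s₁ q₂ s₂ : ℤ} (hq₁ : 0 < q₁)
    (hdet : IsUnit (q₁ * s₂ - q₂ * s₁)) (hsign : (q₁ * r - s₁) * (q₂ * r - s₂) ≤ 0)
    {p P : ℤ} (hp : 0 < p) (hpq : p < q₂) : |q₁ * r - s₁| ≤ |p * r - P| := by
  obtain ⟨x, y, hx, hy⟩ : ∃ x y : ℤ, p = x * q₁ + y * q₂ ∧ P = x * s₁ + y * s₂ := by
    set d := q₁ * s₂ - q₂ * s₁ with hd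
    have hdd : d * d = 1 := Int.isUnit_mul_self hdet
    exact ⟨d * (p * s₂ - P * q₂), d * (P * q₁ - p * s₁),
      by linear_combination -p * hdd + p * d * hd, by linear_combination -P * hdd + P * d * hd⟩
  have hx0 : x ≠ 0 := by
    rintro rfl
    have hy0 : 0 < y := by nlinarith
    nlinarith
  have hxy : x * y ≤ 0 := by
    by_contra! hpos
    rcases pos_and_pos_or_neg_and_neg_of_mul_pos hpos with ⟨hx', hy'⟩ | ⟨hx', hy'⟩ <;> nlinarith
  have hcombine : p * r - P = x * (q₁ * r - s₁) + y * (q₂ * r - s₂) := by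
    rw [hx, hy]
    push_cast
    ring
  have hsame : 0 ≤ x * (q₁ * r - s₁) * (y * (q₂ * r - s₂)) := by
    rw [mul_mul_mul_comm]
    exact mul_nonneg_of_nonpos_of_nonpos (by exact_mod_cast hxy) hsign
  have hx1 : (1 : ℝ) ≤ |(x : ℝ)| := by exact_mod_cast Int.one_le_abs hx0
  calc |q₁ * r - s₁| ≤ |(x : ℝ)| * |q₁ * r - s₁| := le_mul_of_one_le_left (abs_nonneg _) hx1
    _ = |x * (q₁ * r - s₁)| := (abs_mul _ _).symm
    _ ≤ |x * (q₁ * r - s₁)| + |y * (q₂ * r - s₂)| := le_add_of_nonneg_right (abs_nonneg _)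
    _ = |p * r - P| := by rw [hcombine, (abs_add_eq_add_abs_iff _ _).2 (mul_nonneg_iff.1 hsame)]

end Rotation

/-! ### Convergents of the frequency -/

section Convergents

/-- The denominators `2, 7, 16, 39, …` of the convergents `1/2, 4/7, 9/16, 22/39, …` of `rho`. The
first convergents `0` and `1` are left out, so that the recursion is uniform. -/
def convDen : ℕ → ℕ
  | 0 => 2
  | 1 => 7
  | n + 2 => 2 * convDen (n + 1) + convDen n

/-- The numerators `1, 4, 9, 22, …` of the convergents of `rho` whose denominators are given by
`convDen`. -/
def convNum : ℕ → ℕ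
  | 0 => 1
  | 1 => 4
  | n + 2 => 2 * convNum (n + 1) + convNum n

/-- The distance of `convDen n * rho` to the nearest integer `convNum n`. -/
noncomputable def convErr (n : ℕ) : ℝ := (2 * rho - 1) * (√2 - 1) ^ n

theorem convDen_add_two (n : ℕ) : convDen (n + 2) = 2 * convDen (n + 1) + convDen n := rfl

theorem convDen_pos (n : ℕ) : 0 < convDen n := by
  induction n using Nat.twoStepInduction with
  | zero | one => simp [convDen]
  | more n ih _ => rw [convDen_add_two]; omega

theorem two_mul_convDen_le (n : ℕ) : 2 * convDen n ≤ convDen (n + 1) := by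
  cases n with
  | zero => simp [convDen]
  | succ n => rw [convDen_add_two]; omega

theorem convDen_mul_convNum_sub (n : ℕ) :
    (convDen n : ℤ) * convNum (n + 1) - convDen (n + 1) * convNum n = (-1) ^ n := by
  induction n with
  | zero => simp [convDen, convNum]
  | succ n ih =>
    rw [pow_succ, ← ih, convDen, convNum]
    push_cast
    ring

theorem convDen_mul_rho_sub (n : ℕ) :
    convDen n * rho - convNum n = (2 * rho - 1) * (1 - √2) ^ n := by
  have hsq : √2 ^ 2 = 2 := Real.sq_sqrt zero_le_two
  induction n using Nat.twoStepInduction with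
  | zero => simp [convDen, convNum, mul_comm]
  | one =>
    simp only [convDen, convNum, rho]
    push_cast
    linear_combination (-2 / 17) * hsq
  | more n ih ih' =>
    simp only [convDen, convNum]
    push_cast
    linear_combination 2 * ih' + ih - (2 * rho - 1) * (1 - √2) ^ n * hsq

theorem convErr_zero : convErr 0 = 2 * rho - 1 := by simp [convErr]

theorem convErr_succ (n : ℕ) : convErr (n + 1) = (√2 - 1) * convErr n := by
  rw [convErr, convErr, pow_succ]
  ring

theorem convErr_pos (n : ℕ) : 0 < convErr n :=
  mul_pos (by linarith [rho_mem_Ioo.1]) (pow_pos (by linarith [sqrt_two_mem_Ioo.1]) n)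

theorem abs_convDen_mul_rho_sub (n : ℕ) : |convDen n * rho - convNum n| = convErr n := by
  have hsqrt : 0 ≤ √2 - 1 := by linarith [sqrt_two_mem_Ioo.1]
  have hrho : 0 ≤ 2 * rho - 1 := by linarith [rho_mem_Ioo.1]
  rw [convDen_mul_rho_sub, abs_mul, abs_pow, abs_of_nonneg hrho, abs_sub_comm,
    abs_of_nonneg hsqrt, convErr]

theorem convErr_le_abs_mul_rho_sub {n p : ℕ} (hp : 0 < p) (hpn : p < convDen (n + 1)) (P : ℤ) :
    convErr n ≤ |p * rho - P| := by
  have hdet : IsUnit ((convDen n : ℤ) * (convNum (n + 1) : ℤ) -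
      (convDen (n + 1) : ℤ) * convNum n) := by
    rw [convDen_mul_convNum_sub]
    exact isUnit_neg_one.pow n
  have hsign : (((convDen n : ℤ) : ℝ) * rho - (convNum n : ℤ)) *
      (((convDen (n + 1) : ℤ) : ℝ) * rho - (convNum (n + 1) : ℤ)) ≤ 0 := by
    simp only [Int.cast_natCast, convDen_mul_rho_sub]
    rw [pow_succ, show (2 * rho - 1) * (1 - √2) ^ n * ((2 * rho - 1) * ((1 - √2) ^ n * (1 - √2))) =
      ((2 * rho - 1) * (1 - √2) ^ n) ^ 2 * (1 - √2) by ring]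
    exact mul_nonpos_of_nonneg_of_nonpos (sq_nonneg _) (by linarith [sqrt_two_mem_Ioo.1])
  rw [← abs_convDen_mul_rho_sub]
  exact_mod_cast abs_mul_sub_le_of_isUnit_det (by exact_mod_cast convDen_pos n) hdet hsign
    (Int.natCast_pos.2 hp) (Int.ofNat_lt.2 hpn) (P := P)

theorem one_sub_rho_le_abs_rho_sub (P : ℤ) : 1 - rho ≤ |rho - P| := by
  obtain ⟨hlo, hhi⟩ := rho_mem_Ioo
  rcases le_or_gt P 0 with hP | hP
  · have hP' : (P : ℝ) ≤ 0 := by exact_mod_cast hP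
    exact le_trans (by linarith) (le_abs_self _)
  · have hP' : (1 : ℝ) ≤ P := by exact_mod_cast hP
    exact le_trans (by linarith) (neg_le_abs _)

theorem exists_convDen_le_lt {p : ℕ} (hp : 16 ≤ p) :
    ∃ n, convDen (n + 2) ≤ p ∧ p < convDen (n + 3) := by
  induction p, hp using Nat.le_induction with
  | base => exact ⟨0, by simp [convDen]⟩
  | succ p _ ih =>
    obtain ⟨n, hle, hlt⟩ := ih
    rcases (Nat.succ_le_of_lt hlt).lt_or_eq with hlt' | heq
    · exact ⟨n, by omega, hlt'⟩
    · have := two_mul_convDen_le (n + 3)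
      exact ⟨n + 1, heq.ge, show p + 1 < convDen (n + 3 + 1) by omega⟩

theorem HitsArc.shrink_one {T : ℕ} {δ δ' : ℝ} (h : HitsArc rho T δ) (hδ' : 1 - rho ≤ δ')
    (hδ : δ ≤ δ' + (1 - rho)) : HitsArc rho (T + 1) δ' := by
  have habs : |((1 : ℕ) : ℝ) * rho - (1 : ℤ)| = 1 - rho := by
    rw [Nat.cast_one, one_mul, Int.cast_one, abs_sub_comm, abs_of_pos]
    linarith [rho_mem_Ioo.2]
  exact h.shrink 1 1 (habs.trans_le hδ') (habs.symm ▸ hδ)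

theorem HitsArc.shrink_convDen {T : ℕ} {δ δ' : ℝ} (h : HitsArc rho T δ) (n : ℕ)
    (hδ' : convErr n ≤ δ') (hδ : δ ≤ δ' + convErr n) : HitsArc rho (T + convDen n) δ' := by
  rw [← abs_convDen_mul_rho_sub] at hδ hδ'
  exact h.shrink (convDen n) (convNum n) (by exact_mod_cast hδ') (by exact_mod_cast hδ)

theorem hitsArc_two : HitsArc rho 2 rho := by
  obtain ⟨hlo, hhi⟩ := rho_mem_Ioo
  exact hitsArc_one_one.shrink_one (by linarith) (by linarith)

theorem hitsArc_five : HitsArc rho 5 (2 - 3 * rho) := by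
  obtain ⟨hlo, hhi⟩ := rho_mem_Ioo
  have h3 : HitsArc rho 3 (1 - rho) := hitsArc_two.shrink_one le_rfl (by linarith)
  refine h3.shrink_convDen 0 ?_ ?_ <;> rw [convErr_zero] <;> linarith

theorem hitsArc_nine : HitsArc rho 9 (2 * rho - 1) := by
  obtain ⟨hlo, hhi⟩ := rho_mem_Ioo
  have h7 : HitsArc rho 7 (3 - 5 * rho) := by
    refine hitsArc_five.shrink_convDen 0 ?_ ?_ <;> rw [convErr_zero] <;> linarith
  refine h7.shrink_convDen 0 ?_ ?_ <;> rw [convErr_zero]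
  linarith

theorem hitsArc_convErr (n : ℕ) : HitsArc rho (convDen n + convDen (n + 1)) (convErr n) := by
  induction n with
  | zero => exact convErr_zero ▸ hitsArc_nine
  | succ n ih =>
    obtain ⟨hlo, hhi⟩ := sqrt_two_mem_Ioo
    have herr := convErr_succ n
    have hpos := convErr_pos n
    have h : HitsArc rho (convDen n + convDen (n + 1) + convDen (n + 1))
        (convErr n - convErr (n + 1)) :=
      ih.shrink_convDen (n + 1) (by nlinarith) (by linarith)
    have h' := h.shrink_convDen (n + 1) le_rfl (by nlinarith)
    convert h' using 1
    rw [convDen_add_two]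
    ring

-- The approximation error of `p` may be as small as `convErr (n + 2)`, but `6 * (√2 - 1) ^ 2 > 1`,
-- so six times this error is still at least `convErr n`.
theorem exists_hitsArc_six_mul {p : ℕ} (hp : 0 < p) (P : ℤ) :
    ∃ T, HitsArc rho T (6 * |p * rho - P|) ∧ 10 * T ≤ 6 * p + 20 := by
  obtain ⟨hρlo, hρhi⟩ := rho_mem_Ioo
  have hlo := sqrt_two_mem_Ioo.1
  rcases (Nat.succ_le_of_lt hp).eq_or_lt with rfl | hp1
  · have happrox := one_sub_rho_le_abs_rho_sub P
    exact ⟨1, hitsArc_one_one.mono (by rw [Nat.cast_one, one_mul]; linarith), by norm_num⟩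
  rcases lt_or_ge p 7 with hp7 | hp7
  · have happrox := convErr_le_abs_mul_rho_sub (n := 0) hp hp7 P
    rw [convErr_zero] at happrox
    exact ⟨2, hitsArc_two.mono (by linarith), by omega⟩
  rcases lt_or_ge p 16 with hp16 | hp16
  · have happrox := convErr_le_abs_mul_rho_sub (n := 1) hp hp16 P
    rw [convErr_succ, convErr_zero] at happrox
    exact ⟨5, hitsArc_five.mono (by nlinarith), by omega⟩
  obtain ⟨n, hle, hlt⟩ := exists_convDen_le_lt hp16
  have happrox := convErr_le_abs_mul_rho_sub hp hlt P
  have hsix : convErr n ≤ 6 * convErr (n + 2) := by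
    rw [convErr_succ, convErr_succ]
    nlinarith [convErr_pos n, mul_self_nonneg (√2 - 1.4142)]
  refine ⟨_, (hitsArc_convErr n).mono (by linarith), ?_⟩
  have := two_mul_convDen_le n
  rw [convDen_add_two] at hle
  omega

theorem ten_mul_le_of_floor_eq {p : ℕ} (hp : 0 < p) {P : ℤ} {x : ℝ} {m : ℕ}
    (hm : ∀ k ≤ m, ⌊x + k * rho + 6 * (p * rho - P)⌋ = ⌊x + k * rho⌋) : 10 * m ≤ 6 * p := by
  obtain ⟨T, hT, hTp⟩ := exists_hitsArc_six_mul hp P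
  have habs : |6 * (p * rho - P)| = 6 * |p * rho - P| := by rw [abs_mul, abs_of_pos (by norm_num)]
  have := (habs.symm ▸ hT).lt_of_floor_eq hm
  omega

end Convergents

/-! ### Cyclic colourings -/

section Colouring

/-- The letter of `α ⊕ α` lying over the binary letter `c` and coloured by `z`. It lets both
alphabets of a colouring be treated at once. -/
def colouredLetter (c : Bool) (z : α) : α ⊕ α := if c then Sum.inr z else Sum.inl z

theorem colouredLetter_inj {c d : Bool} {z w : α} :
    colouredLetter c z = colouredLetter d w ↔ c = d ∧ z = w := by
  cases c <;> cases d <;> simp [colouredLetter]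

theorem exists_eq_colouredLetter (x : α ⊕ α) : ∃ c z, x = colouredLetter c z := by
  cases x with
  | inl z => exact ⟨false, z, rfl⟩
  | inr z => exact ⟨true, z, rfl⟩

variable {δ : ℕ} {u : ℕ → Bool}

theorem colourCyc_eq_colouredLetter (δ : ℕ) (u : ℕ → Bool) (n : ℕ) :
    colourCyc δ u n = colouredLetter (u n) (countBefore u (u n) n : ZMod δ) := by
  cases h : u n <;> simp [colourCyc, colour, cyc, colouredLetter, h]

theorem natCount_colourCyc_eq (δ : ℕ) (u : ℕ → Bool) (i n : ℕ) (c : Bool) (z : ZMod δ) :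
    Nat.count (fun k => colourCyc δ u (i + k) = colouredLetter c z) n =
      Nat.count (fun k => ((countBefore u c i + k : ℕ) : ZMod δ) = z)
        ((factorAt u i n).count c) := by
  induction n with
  | zero => simp [factorAt]
  | succ n ih =>
    rw [Nat.count_succ, count_factorAt_succ, ih, colourCyc_eq_colouredLetter]
    simp only [colouredLetter_inj]
    by_cases hc : u (i + n) = c
    · simp [hc, Nat.count_succ, countBefore_add]
    · simp [hc]

theorem count_natCast_add_eq [NeZero δ] (a m : ℕ) (z : ZMod δ) :
    m < δ * (Nat.count (fun k => ((a + k : ℕ) : ZMod δ) = z) m + 1) ∧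
      δ * Nat.count (fun k => ((a + k : ℕ) : ZMod δ) = z) m < m + δ := by
  have hδ : 0 < δ := NeZero.pos δ
  have hiff (k : ℕ) : ((a + k : ℕ) : ZMod δ) = z ↔ k ≡ (z - a).val [MOD δ] := by
    rw [← ZMod.natCast_eq_natCast_iff, ZMod.natCast_zmod_val, eq_sub_iff_add_eq', Nat.cast_add]
  simp only [hiff, Nat.count_modEq_card _ hδ]
  have hdiv := Nat.div_add_mod m δ
  have hmod := Nat.mod_lt m hδ
  split_ifs <;> constructor <;> simp only [mul_add, mul_one, mul_zero] <;> omega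

-- The number of occurrences of a coloured letter in a window depends, up to rounding, only on the
-- number of letters that receive its colour class.
theorem Sturmian.balanced_colourCyc [NeZero δ] (hu : Sturmian u) :
    Balanced (colourCyc δ u) := by
  refine balanced_iff.2 fun x i j n => ?_
  obtain ⟨c, z, rfl⟩ := exists_eq_colouredLetter x
  rw [count_factorAt, count_factorAt, natCount_colourCyc_eq, natCount_colourCyc_eq]
  have hle := balanced_iff.1 hu.balanced c i j n
  have hi := (count_natCast_add_eq (countBefore u c i) ((factorAt u i n).count c) z).2
  have hj := (count_natCast_add_eq (countBefore u c j) ((factorAt u j n).count c) z).1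
  refine Nat.lt_succ_iff.1 (Nat.lt_of_mul_lt_mul_left (a := δ) ?_)
  simp only [mul_add, mul_one, Nat.succ_eq_add_one] at hi hj ⊢
  omega

theorem colourCyc_eq_add_iff {i p : ℕ} :
    colourCyc δ u i = colourCyc δ u (i + p) ↔
      u i = u (i + p) ∧ δ ∣ (factorAt u i p).count (u i) := by
  rw [colourCyc_eq_colouredLetter, colourCyc_eq_colouredLetter, colouredLetter_inj]
  refine and_congr_right fun h => ?_
  rw [← h, countBefore_add, Nat.cast_add, left_eq_add, ZMod.natCast_eq_zero_iff]

theorem count_factorAt_add_of_forall_eq [DecidableEq α] {v : ℕ → α} {i p m : ℕ}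
    (h : ∀ k < m, v (i + k) = v (i + k + p)) (a : α) :
    (factorAt v (i + m) p).count a = (factorAt v i p).count a := by
  have hrun : factorAt v i m = factorAt v (i + p) m := factorAt_eq_factorAt_iff.2 fun k hk => by
    rw [h k hk, Nat.add_right_comm]
  have hm := count_factorAt_add v i m p a
  have hp := count_factorAt_add v i p m a
  rw [← hrun, add_comm p] at hp
  omega

theorem colourCyc_repetition {i p m : ℕ}
    (h : ∀ k < m, colourCyc δ u (i + k) = colourCyc δ u (i + k + p)) {k : ℕ} (hk : k < m) :
    u (i + k) = u (i + k + p) ∧ δ ∣ (factorAt u i p).count (u (i + k)) := by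
  have hu (k : ℕ) (hk : k < m) := colourCyc_eq_add_iff.1 (h k hk)
  rw [← count_factorAt_add_of_forall_eq fun l hl => (hu l (hl.trans hk)).1]
  exact hu k hk

end Colouring

/-! ### The overlap bound -/

section Overlap

variable {u : ℕ → Bool} {i p m : ℕ}

theorem IsStandard.ten_mul_le_of_six_dvd_count (hu : IsStandard u) (hfreq : HasFreq u true rho)
    (hp : 0 < p) (h : ∀ k < m, u (i + k) = u (i + k + p))
    (hdvd : ∀ c, 6 ∣ (factorAt u i p).count c) : 10 * m ≤ p := by
  obtain ⟨P, hP⟩ := hdvd true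
  obtain ⟨q, rfl⟩ : 6 ∣ p := by
    have hsum := count_not_add_count_factorAt u true i p
    exact hsum ▸ (hdvd _).add (hdvd _)
  refine ten_mul_le_of_floor_eq (P := P) (x := (i + 1) * rho) (by omega) fun k hk => ?_
  have hcount : countBefore u true (i + k + 6 * q) = countBefore u true (i + k) + 6 * P := by
    rw [countBefore_add, count_factorAt_add_of_forall_eq fun l hl => h l (hl.trans_le hk), hP]
  have hfloor := congrArg (Nat.cast (R := ℤ)) hcount
  push_cast at hfloor
  rw [hu.countBefore_eq_floor hfreq irrational_rho,
    hu.countBefore_eq_floor hfreq irrational_rho] at hfloor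
  rw [← sub_eq_iff_eq_add, ← Int.floor_sub_intCast] at hfloor
  convert hfloor using 2 <;> push_cast <;> ring

variable {c : Bool} {r : ℝ}

theorem count_factorAt_of_forall_eq (h : ∀ k < m, u (i + k) = c) :
    (factorAt u i m).count c = m := by
  rw [count_factorAt]
  exact Nat.count_iff_forall.2 fun k hk => h k hk

theorem IsStandard.run_length_lt (hu : IsStandard u) (hr : HasFreq u c r) (hirr : Irrational r)
    (h : ∀ k < m, u (i + k) = c) : m < 1 + m * r := by
  have hdisc := abs_lt.1 (hu.abs_count_factorAt_sub_lt hr hirr i m)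
  rw [count_factorAt_of_forall_eq h] at hdisc
  linarith [hdisc.2]

-- The two runs extend the window to length `p + m`, and the first run can be cut off, leaving
-- length `p - m`.
theorem IsStandard.count_between_runs_bounds (hu : IsStandard u) (hr : HasFreq u c r)
    (hirr : Irrational r) (h : ∀ k < m, u (i + k) = c) (hp : ∀ k < m, u (i + k + p) = c)
    (hmp : m ≤ p) :
    ((factorAt u i p).count c : ℝ) + m < 1 + (p + m) * r ∧
      (p - m) * r + m < 1 + (factorAt u i p).count c := by
  have hlong := abs_lt.1 (hu.abs_count_factorAt_sub_lt hr hirr i (p + m))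
  have hshort := abs_lt.1 (hu.abs_count_factorAt_sub_lt hr hirr (i + m) (p - m))
  have hcut := count_factorAt_add u i m (p - m) c
  rw [Nat.add_sub_cancel' hmp, count_factorAt_of_forall_eq h] at hcut
  rw [count_factorAt_add, count_factorAt_of_forall_eq (i := i + p) fun k hk => by
    rw [Nat.add_right_comm]; exact hp k hk] at hlong
  rw [← Nat.cast_inj (R := ℝ)] at hcut
  push_cast [hmp] at hlong hshort hcut
  constructor <;> linarith [hlong.2, hshort.1]

theorem IsStandard.ten_mul_le_of_false_runs (hu : IsStandard u) (hfreq : HasFreq u true rho)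
    (h : ∀ k < m, u (i + k) = false) (hp : ∀ k < m, u (i + k + p) = false)
    (hcount : 6 ≤ (factorAt u i p).count false) : 10 * m ≤ p := by
  obtain ⟨hρ, -⟩ := rho_mem_Ioo
  have hfreq' : HasFreq u false (1 - rho) := hfreq.not
  have hirr : Irrational (1 - rho) := by simpa using irrational_rho.natCast_sub 1
  have hcount_le : (factorAt u i p).count false ≤ p :=
    List.count_le_length.trans_eq (length_factorAt ..)
  have hcount' : (6 : ℝ) ≤ (factorAt u i p).count false := by exact_mod_cast hcount
  have hm : m ≤ 1 := by
    have hrun := hu.run_length_lt hfreq' hirr h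
    by_contra! hm
    have hm' : (2 : ℝ) ≤ m := by exact_mod_cast hm
    nlinarith
  interval_cases m
  · omega
  · have hlong := (hu.count_between_runs_bounds hfreq' hirr h hp (by omega)).1
    have hp' : (9 : ℝ) < p := by
      push_cast at hlong
      nlinarith
    exact_mod_cast hp'

theorem IsStandard.ten_mul_le_of_true_runs (hu : IsStandard u) (hfreq : HasFreq u true rho)
    (h : ∀ k < m, u (i + k) = true) (hp : ∀ k < m, u (i + k + p) = true)
    (hcount : 6 ≤ (factorAt u i p).count true) (hdvd : 6 ∣ (factorAt u i p).count true) :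
    10 * m ≤ p := by
  obtain ⟨hρ, hρ'⟩ := rho_mem_Ioo
  have hcount_le : (factorAt u i p).count true ≤ p :=
    List.count_le_length.trans_eq (length_factorAt ..)
  have hcount' : (6 : ℝ) ≤ (factorAt u i p).count true := by exact_mod_cast hcount
  have hm : m ≤ 2 := by
    have hrun := hu.run_length_lt hfreq irrational_rho h
    by_contra! hm
    have hm' : (3 : ℝ) ≤ m := by exact_mod_cast hm
    nlinarith
  obtain ⟨hlong, hshort⟩ :=
    hu.count_between_runs_bounds hfreq irrational_rho h hp (by omega)
  interval_cases m
  · omega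
  · have hp' : (9 : ℝ) < p := by
      push_cast at hlong
      nlinarith
    exact_mod_cast hp'
  · push_cast at hlong hshort
    have hne : (factorAt u i p).count true ≠ 6 := fun h6 => by
      rw [h6] at hlong hshort
      have hlo : (10 : ℝ) < p := by
        push_cast at hlong
        nlinarith
      have hhi : (p : ℝ) < 11 := by
        push_cast at hshort
        nlinarith
      have hlo' : 10 < p := by exact_mod_cast hlo
      have hhi' : p < 11 := by exact_mod_cast hhi
      omega
    have hcount' : (12 : ℝ) ≤ (factorAt u i p).count true := by
      exact_mod_cast (by omega : 12 ≤ (factorAt u i p).count true)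
    have hp' : (19 : ℝ) < p := by nlinarith
    exact_mod_cast hp'

theorem IsStandard.ten_mul_le_of_colourCyc_repetition (hu : IsStandard u)
    (hfreq : HasFreq u true rho) (hp : 0 < p)
    (h : ∀ k < m, colourCyc 6 u (i + k) = colourCyc 6 u (i + k + p)) : 10 * m ≤ p := by
  have hrep (k : ℕ) (hk : k < m) := colourCyc_repetition h hk
  by_cases hdvd : ∀ c, 6 ∣ (factorAt u i p).count c
  · exact hu.ten_mul_le_of_six_dvd_count hfreq hp (fun k hk => (hrep k hk).1) hdvd
  obtain rfl | hm := m.eq_zero_or_pos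
  · omega
  obtain ⟨d, hd⟩ := not_forall.1 hdvd
  have hrun (k : ℕ) (hk : k < m) : u (i + k) = !d :=
    Bool.eq_not.2 fun hkd => hd (hkd ▸ (hrep k hk).2)
  have hrun' (k : ℕ) (hk : k < m) : u (i + k + p) = !d := (hrep k hk).1 ▸ hrun k hk
  have hdvd' : 6 ∣ (factorAt u i p).count !d := hrun 0 hm ▸ (hrep 0 hm).2
  have hpos : 0 < (factorAt u i p).count !d := by
    obtain ⟨q, rfl⟩ := Nat.exists_eq_add_of_lt hp
    simp [factorAt_succ', ← hrun 0 hm]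
  have hcount := Nat.le_of_dvd hpos hdvd'
  cases d
  · exact hu.ten_mul_le_of_true_runs hfreq hrun hrun' hcount hdvd'
  · exact hu.ten_mul_le_of_false_runs hfreq hrun hrun' hcount

end Overlap

/-! ### The critical exponent -/

section CriticalExponent

variable {v : ℕ → α}

theorem isPeriod_factorAt_iff {i n p : ℕ} :
    IsPeriod (factorAt v i n) p ↔ 0 < p ∧ ∀ k, k + p < n → v (i + k) = v (i + k + p) := by
  rw [IsPeriod, length_factorAt]
  refine and_congr_right fun _ => forall₂_congr fun k hk => ?_
  simp [factorAt, hk, (Nat.le_add_right k p).trans_lt hk, Nat.add_assoc]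

theorem IsPeriod.minPeriod_le {z : List α} {p : ℕ} (h : IsPeriod z p) : minPeriod z ≤ p :=
  Nat.sInf_le h

theorem IsPeriod.isPeriod_minPeriod {z : List α} {p : ℕ} (h : IsPeriod z p) :
    IsPeriod z (minPeriod z) :=
  Nat.sInf_mem (s := {p | IsPeriod z p}) ⟨p, h⟩

theorem isPeriod_length {z : List α} (hz : z ≠ []) : IsPeriod z z.length :=
  ⟨List.length_pos_iff.2 hz, fun i hi => absurd hi (by omega)⟩

theorem criticalExponent_le_iff {c : ℝ≥0∞} :
    criticalExponent v ≤ c ↔ ∀ i p m : ℕ, 0 < p → (∀ k < m, v (i + k) = v (i + k + p)) →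
      ((p + m : ℕ) : ℝ≥0∞) / p ≤ c := by
  rw [criticalExponent, iSup₂_le_iff]
  constructor
  · intro h i p m hp hrep
    have hper : IsPeriod (factorAt v i (p + m)) p :=
      isPeriod_factorAt_iff.2 ⟨hp, fun k hk => hrep k (by omega)⟩
    have hne : factorAt v i (p + m) ≠ [] :=
      List.length_pos_iff.1 (by rw [length_factorAt]; omega)
    refine le_trans ?_ (h _ ⟨isFactor_factorAt v i (p + m), hne⟩)
    rw [expE, length_factorAt]
    gcongr
    exact hper.minPeriod_le
  · rintro h z ⟨⟨i, hi⟩, hne⟩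
    have hmin := (isPeriod_length hne).minPeriod_le
    have hper := (isPeriod_length hne).isPeriod_minPeriod
    rw [expE]
    generalize minPeriod z = p at hmin hper ⊢
    obtain ⟨m, hm⟩ := Nat.exists_eq_add_of_le hmin
    rw [← hi, isPeriod_factorAt_iff] at hper
    rw [hm]
    exact h i p m hper.1 fun k hk => hper.2 k (by omega)

variable {u : ℕ → Bool}

theorem IsStandard.colourCyc_six_four_eq (hu : IsStandard u) (hfreq : HasFreq u true rho) :
    colourCyc 6 u 4 = colourCyc 6 u (4 + 10) := by
  obtain ⟨hρ, hρ'⟩ := rho_mem_Ioo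
  have hcount {n k : ℕ} (hlo : (k : ℝ) ≤ (n + 1) * rho) (hhi : (n + 1) * rho < k + 1) :
      countBefore u true n = k := by
    have hfloor := hu.countBefore_eq_floor hfreq irrational_rho n
    have hk : ⌊(n + 1) * rho⌋ = (k : ℤ) :=
      Int.floor_eq_iff.2 ⟨by exact_mod_cast hlo, by exact_mod_cast hhi⟩
    exact_mod_cast hfloor.trans hk
  have htrue {n : ℕ} (h : countBefore u true n < countBefore u true (n + 1)) : u n = true := by
    by_contra hn
    simp [countBefore_succ, hn] at h
  have h4 : countBefore u true 4 = 2 := hcount (by norm_num; linarith) (by norm_num; linarith)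
  have h5 : countBefore u true 5 = 3 := hcount (by norm_num; linarith) (by norm_num; linarith)
  have h14 : countBefore u true 14 = 8 := hcount (by norm_num; linarith) (by norm_num; linarith)
  have h15 : countBefore u true 15 = 9 := hcount (by norm_num; linarith) (by norm_num; linarith)
  have hu4 : u 4 = true := htrue (by simp [h4, h5])
  have hu14 : u 14 = true := htrue (by simp [h14, h15])
  have hwindow : (factorAt u 4 10).count true = 6 := by
    have hadd : countBefore u true 14 = _ := countBefore_add u true 4 10
    omega
  rw [colourCyc_eq_add_iff, hu4, hwindow]
  exact ⟨hu14.symm, dvd_rfl⟩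

theorem IsStandard.criticalExponent_colourCyc_six (hu : IsStandard u)
    (hfreq : HasFreq u true rho) : criticalExponent (colourCyc 6 u) = 11 / 10 := by
  apply le_antisymm
  · refine criticalExponent_le_iff.2 fun i p m hp hrep => ?_
    have hle : 10 * (p + m) ≤ 11 * p := by
      have := hu.ten_mul_le_of_colourCyc_repetition hfreq hp hrep
      omega
    rw [ENNReal.div_le_iff (by simpa using hp.ne') (by simp),
      ← ENNReal.mul_div_right_comm, ENNReal.le_div_iff_mul_le (by simp) (by simp), mul_comm]
    exact_mod_cast hle
  · simpa using criticalExponent_le_iff.1 le_rfl 4 10 1 (by norm_num) fun k hk => by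
      rw [Nat.lt_one_iff.1 hk]
      exact hu.colourCyc_six_four_eq hfreq

end CriticalExponent

theorem statement17 (u : ℕ → Bool) (hu : IsStandard u)
    (θ : ℝ) (hθ : HasSlope u θ) (a : ℕ → ℕ) (hcf : HasCF θ a)
    (ha1 : a 1 = 1) (ha2 : a 2 = 3) (ha : ∀ n, 3 ≤ n → a n = 2) :
    Balanced (colourCyc 6 u) ∧
    Nat.card (ZMod 6 ⊕ ZMod 6) = 12 ∧
    criticalExponent (colourCyc 6 u) = (11 : ℝ≥0∞) / 10 := by
  have hfreq : HasFreq u true rho := hasFreq_true_rho hθ hcf ha1 ha2 ha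
  exact ⟨hu.1.balanced_colourCyc, by rw [Nat.card_sum, Nat.card_zmod],
    hu.criticalExponent_colourCyc_six hfreq⟩

end BalancedCE
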